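/- Let p be a prime, ℓ ≥ 1, and let [c] be a nonzero constant sequence in Z_{p^ℓ} with t = ν_p(c). Let s ≥ 1 have base-p expansion s = ⌊a_{k_s} a_{k_s−1} ⋯ a_1 a_0⌋_p with a_{k_s} ≠ 0 (so k_s = ⌊log_p s⌋). Then the period of Σ^s[c] is exactly p^{ℓ−t+k_s}. -/

import Mathlib

/-- The shift operator `θ`: `θ f n = f (n+1)`. -/
def shiftSeq {M : ℕ} (f : ℕ → ZMod M) : ℕ → ZMod M := fun n => f (n + 1)

/-- The difference operator `Δ = θ - id`: `Δ f n = f (n+1) - f n`. -/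
def deltaSeq {M : ℕ} (f : ℕ → ZMod M) : ℕ → ZMod M := fun n => f (n + 1) - f n

/-- A sequence is periodic if `θ^j f = f` for some `j ≥ 1`. -/
def IsPeriodicSeq {M : ℕ} (f : ℕ → ZMod M) : Prop := ∃ j, 1 ≤ j ∧ Function.Periodic f j

/-- The period `τ(f)`: the least `j ≥ 1` with `θ^j f = f`. -/
noncomputable def perSeq {M : ℕ} (f : ℕ → ZMod M) : ℕ :=
  sInf {j | 1 ≤ j ∧ Function.Periodic f j}

/-- The trace `tr f = ∑_{i=0}^{τ(f)-1} f i`. -/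
noncomputable def trSeq {M : ℕ} (f : ℕ → ZMod M) : ZMod M :=
  ∑ i ∈ Finset.range (perSeq f), f i

/-- The sum operator `Σ`: `Σf(0) = 0`, `Σf(n) = f(n-1) + Σf(n-1)`. -/
def sigmaSeq {M : ℕ} (f : ℕ → ZMod M) : ℕ → ZMod M
  | 0 => 0
  | n + 1 => f n + sigmaSeq f n

/-- A sequence is nilpotent if `Δ^η f = 0` for some `η ≥ 1`. -/
def IsNilpotentSeq {M : ℕ} (f : ℕ → ZMod M) : Prop := ∃ η, 1 ≤ η ∧ deltaSeq^[η] f = 0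

/-- A sequence is idempotent if `Δ^η f = f` for some `η ≥ 1`. -/
def IsIdempotentSeq {M : ℕ} (f : ℕ → ZMod M) : Prop := ∃ η, 1 ≤ η ∧ deltaSeq^[η] f = f

/-- The nilpotency index: the least `η ≥ 1` with `Δ^η f = 0`. -/
noncomputable def nilIndex {M : ℕ} (f : ℕ → ZMod M) : ℕ :=
  sInf {η | 1 ≤ η ∧ deltaSeq^[η] f = 0}

/-- The idempotency index: the least `η ≥ 1` with `Δ^η f = f`. -/
noncomputable def idemIndex {M : ℕ} (f : ℕ → ZMod M) : ℕ :=
  sInf {η | 1 ≤ η ∧ deltaSeq^[η] f = f}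

/-- The `p`-adic valuation on `ZMod M`, with `ν(0) = ∞`. -/
noncomputable def nuVal (p : ℕ) {M : ℕ} (a : ZMod M) : ℕ∞ :=
  if a = 0 then ⊤ else (padicValNat p a.val : ℕ∞)

/-- `Double(f, q^t)`: repeat `q` times each successive `q^t`-subsequence of `f`. -/
def DoubleSeq {M : ℕ} (f : ℕ → ZMod M) (q t : ℕ) : ℕ → ZMod M :=
  fun n => f ((n / q ^ (t + 1)) * q ^ t + n % q ^ t)

/-- `Alt(f, q^t)`: alternate `(q-1)q^t` zeros with the successive `q^t`-subsequences of `f`. -/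
def AltSeq {M : ℕ} (f : ℕ → ZMod M) (q t : ℕ) : ℕ → ZMod M :=
  fun n => if (n / q ^ t) % q = q - 1 then f ((n / q ^ (t + 1)) * q ^ t + n % q ^ t) else 0

/-- The binomial sequence `bin_s(n) = C(n,s) mod p^ℓ`. -/
def binSeq (p l : ℕ) (s : ℕ) : ℕ → ZMod (p ^ l) := fun n => (n.choose s : ZMod (p ^ l))

/-- `f ≡_ν g`: zeros coincide, and valuations of nonzero values coincide. -/
def nuEquiv (p : ℕ) {M : ℕ} (f g : ℕ → ZMod M) : Prop :=
  ∀ n, (f n = 0 ↔ g n = 0) ∧ (f n ≠ 0 → padicValNat p (f n).val = padicValNat p (g n).val)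

/-- `Π_i(f)`: number of entries of valuation `i` in one period of `f`. -/
noncomputable def PiCount (p : ℕ) {M : ℕ} (i : ℕ) (f : ℕ → ZMod M) : ℕ :=
  ((Finset.range (perSeq f)).filter fun x => f x ≠ 0 ∧ padicValNat p (f x).val = i).card

/-- `Z(f)`: number of zero entries in one period of `f`. -/
noncomputable def ZCount {M : ℕ} (f : ℕ → ZMod M) : ℕ :=
  ((Finset.range (perSeq f)).filter fun x => f x = 0).card

/-- The `j`-th base-`p` digit of `x`. -/
def dig (p x j : ℕ) : ℕ := x / p ^ j % p

/-!
Since `C(n + 1, s + 1) = C(n, s) + C(n, s + 1)`, the sequence `Σ^s[c]` is `n ↦ c * C(n, s)`, and a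
shift by `j` fixes it exactly when `Σ[c], …, Σ^s[c]` all vanish at `j`, i.e. when
`p^(ℓ - t) ∣ C(j, i)` for `1 ≤ i ≤ s`. For `j = p^e` the valuation of `C(p^e, i)` is `e - ν_p(i)`,
which is smallest at `i = p^(k_s)`. So `p^e` is a period if and only if `ℓ - t + k_s ≤ e`, and the
least period, dividing a power of `p`, is `p^(ℓ - t + k_s)`.
-/

section Sequences

open Function

variable {M : ℕ}

theorem shiftSeq_iterate_apply (f : ℕ → ZMod M) (j n : ℕ) : shiftSeq^[j] f n = f (n + j) := by
  induction j generalizing f with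
  | zero => rfl
  | succ _ ih => exact ih (shiftSeq f)

theorem isPeriodicPt_shiftSeq_iff {f : ℕ → ZMod M} {j : ℕ} :
    IsPeriodicPt shiftSeq j f ↔ Periodic f j :=
  funext_iff.trans <| forall_congr' fun n => by rw [shiftSeq_iterate_apply]

theorem perSeq_eq_minimalPeriod (f : ℕ → ZMod M) : perSeq f = minimalPeriod shiftSeq f := by
  rw [minimalPeriod_eq_sInf_n_pos_IsPeriodicPt]
  simp only [isPeriodicPt_shiftSeq_iff]
  rfl

theorem periodic_sigmaSeq_iff {f : ℕ → ZMod M} {j : ℕ} :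
    Periodic (sigmaSeq f) j ↔ Periodic f j ∧ sigmaSeq f j = 0 := by
  have sigmaSeq_succ_add (n : ℕ) : sigmaSeq f (n + 1 + j) = f (n + j) + sigmaSeq f (n + j) := by
    rw [Nat.add_right_comm, sigmaSeq]
  constructor
  · refine fun h => ⟨fun n => ?_, by simpa only [zero_add, sigmaSeq] using h 0⟩
    have h_succ := h (n + 1)
    rwa [sigmaSeq_succ_add, h n, sigmaSeq, add_left_inj] at h_succ
  · rintro ⟨hf, hj⟩ n
    induction n with
    | zero => rwa [zero_add]
    | succ n ih => rw [sigmaSeq_succ_add, hf n, ih, sigmaSeq]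

theorem periodic_sigmaSeq_iterate_iff {f : ℕ → ZMod M} {s j : ℕ} :
    Periodic (sigmaSeq^[s] f) j ↔ Periodic f j ∧ ∀ i ∈ Set.Icc 1 s, sigmaSeq^[i] f j = 0 := by
  induction s with
  | zero => simp
  | succ s ih =>
    have h_Icc : Set.Icc 1 (s + 1) = insert (s + 1) (Set.Icc 1 s) :=
      (Set.insert_Icc_right_eq_Icc_succ (by simp)).symm
    rw [iterate_succ_apply', periodic_sigmaSeq_iff, ih, ← iterate_succ_apply' sigmaSeq, h_Icc,
      Set.forall_mem_insert, and_assoc, and_comm (b := sigmaSeq^[s + 1] f j = 0)]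

theorem sigmaSeq_iterate_const_apply (c : ZMod M) (s n : ℕ) :
    sigmaSeq^[s] (fun _ => c) n = c * n.choose s := by
  induction s generalizing n with
  | zero => simp
  | succ s ih_s =>
    rw [iterate_succ_apply']
    induction n with
    | zero => simp [sigmaSeq]
    | succ n ih_n => rw [sigmaSeq, ih_s, ih_n, Nat.choose_succ_succ, Nat.cast_add, mul_add]

theorem periodic_sigmaSeq_iterate_const_iff {c : ZMod M} {s j : ℕ} :
    Periodic (sigmaSeq^[s] fun _ => c) j ↔
      ∀ i ∈ Set.Icc 1 s, c * (j.choose i : ZMod M) = 0 := by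
  have h_const : Periodic (fun _ : ℕ => c) j := fun _ => rfl
  simp only [periodic_sigmaSeq_iterate_iff, h_const, true_and, sigmaSeq_iterate_const_apply]

end Sequences

section PrimePowers

variable {p : ℕ}

theorem padicValNat_zmod_val_lt [NeZero p] {l : ℕ} {c : ZMod (p ^ l)} (hc : c ≠ 0) :
    padicValNat p c.val < l :=
  (padicValNat_le_nat_log _).trans_lt <|
    Nat.log_lt_of_lt_pow ((ZMod.val_ne_zero c).2 hc) (ZMod.val_lt c)

variable [Fact p.Prime]

theorem zmod_mul_natCast_eq_zero_iff {l : ℕ} {c : ZMod (p ^ l)} (hc : c ≠ 0) (a : ℕ) :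
    c * (a : ZMod (p ^ l)) = 0 ↔ p ^ (l - padicValNat p c.val) ∣ a := by
  have hval : c.val ≠ 0 := (ZMod.val_ne_zero c).2 hc
  have h_dvd : c * (a : ZMod (p ^ l)) = 0 ↔ p ^ l ∣ c.val * a := by
    rw [← ZMod.natCast_eq_zero_iff, Nat.cast_mul, ZMod.natCast_zmod_val]
  rcases eq_or_ne a 0 with rfl | ha
  · simp
  · rw [h_dvd, padicValNat_dvd_iff_le (mul_ne_zero hval ha), padicValNat_dvd_iff_le ha,
      padicValNat.mul hval ha, tsub_le_iff_left]

theorem pow_dvd_choose_prime_pow_iff {e i : ℕ} (hi : i ≠ 0) (hie : i ≤ p ^ e) (m : ℕ) :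
    p ^ m ∣ (p ^ e).choose i ↔ m + padicValNat p i ≤ e := by
  have hp : p.Prime := Fact.out
  rw [hp.pow_dvd_iff_le_factorization (Nat.choose_pos hie).ne', ← Nat.factorization_def i hp]
  have := Nat.factorization_choose_prime_pow_add_factorization hp hie hi
  omega

theorem forall_pow_dvd_choose_prime_pow_iff {m s : ℕ} (hm : m ≠ 0) (hs : s ≠ 0) (e : ℕ) :
    (∀ i ∈ Set.Icc 1 s, p ^ m ∣ (p ^ e).choose i) ↔ m + Nat.log p s ≤ e := by
  have hp : p.Prime := Fact.out
  constructor
  · intro h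
    -- Capping at `e` avoids the indices `i > p ^ e`, where `C(p^e, i) = 0` gives no information.
    let r := min (Nat.log p s) e
    have hrs : p ^ r ≤ s := Nat.pow_le_of_le_log hs (min_le_left _ _)
    have hre : p ^ r ≤ p ^ e := Nat.pow_le_pow_right hp.pos (min_le_right _ _)
    have hmr : m + r ≤ e := by
      simpa only [padicValNat.prime_pow] using
        (pow_dvd_choose_prime_pow_iff (pow_ne_zero r hp.ne_zero) hre m).1
          (h _ ⟨Nat.one_le_pow _ _ hp.pos, hrs⟩)
    omega
  · rintro h i ⟨hi, his⟩
    rcases le_or_gt i (p ^ e) with hie | hie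
    · refine (pow_dvd_choose_prime_pow_iff (by omega) hie m).2 (le_trans ?_ h)
      gcongr
      exact (padicValNat_le_nat_log i).trans (Nat.log_mono_right his)
    · simp [Nat.choose_eq_zero_of_lt hie]

theorem periodic_sigmaSeq_iterate_const_prime_pow_iff {l s : ℕ} {c : ZMod (p ^ l)} (hc : c ≠ 0)
    (hs : s ≠ 0) (e : ℕ) :
    Function.Periodic (sigmaSeq^[s] fun _ => c) (p ^ e) ↔
      l - padicValNat p c.val + Nat.log p s ≤ e := by
  simp only [periodic_sigmaSeq_iterate_const_iff, zmod_mul_natCast_eq_zero_iff hc]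
  have h_ne : l - padicValNat p c.val ≠ 0 := Nat.sub_ne_zero_of_lt (padicValNat_zmod_val_lt hc)
  exact forall_pow_dvd_choose_prime_pow_iff h_ne hs e

end PrimePowers

/-- the period of `Σ^s[c]` is exactly `p^{ℓ - t + k_s}` where
`t = ν_p(c)` and `k_s = ⌊log_p s⌋`. -/
theorem stmt10 (p l : ℕ) (hp : p.Prime) (hl : 1 ≤ l)
    (c : ZMod (p ^ l)) (hc : c ≠ 0) (t : ℕ) (ht : t = padicValNat p c.val)
    (s : ℕ) (hs : 1 ≤ s) :
    perSeq (sigmaSeq^[s] (fun _ => c)) = p ^ (l - t + Nat.log p s) := by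
  have : Fact p.Prime := ⟨hp⟩
  have htl : t < l := ht ▸ padicValNat_zmod_val_lt hc
  obtain ⟨e, he⟩ : ∃ e, l - t + Nat.log p s = e + 1 := Nat.exists_eq_add_one.2 (by omega)
  have h_iff (d : ℕ) : Function.IsPeriodicPt shiftSeq (p ^ d) (sigmaSeq^[s] fun _ => c) ↔
      e + 1 ≤ d := by
    rw [isPeriodicPt_shiftSeq_iff, periodic_sigmaSeq_iterate_const_prime_pow_iff hc (by omega),
      ← ht, he]
  rw [perSeq_eq_minimalPeriod, he]
  exact Function.minimalPeriod_eq_prime_pow (by simp [h_iff]) ((h_iff _).2 le_rfl)
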